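/- Let F : (ℤ → ℤ) → (ℤ → ℤ) be the cellular automaton global map induced by the local function f(u,v) = u·v·(u + v − u·v) (the rule of semigroup G₁₀). Suppose x : ℤ → ℤ satisfies x(i) ∈ {0,1,2} for all i ∈ ℤ. Then for every n ≥ 1 and every i ∈ ℤ, [F^[n] x] i = x(i)·x(i+n)·(x(i) + x(i+n) − x(i)·x(i+n)) · ∏_{j=1}^{n−1} x(i+j)·(2 − x(i+j)) (the product being empty, hence 1, when n = 1). -/

import Mathlib

/-!
Modulo 4 the rule `u * v * (u + v - u * v)` is just `u * v`. The automaton with local rule the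
multiplication of a commutative monoid satisfies, by Pascal's rule,
`F^[n] x i = ∏ j ∈ range (n + 1), x (i + j) ^ n.choose j`. The two outer exponents are 1 and all
the others are at least 2; since `2 ^ 2 = 0` modulo 4, an inner factor is 1 if `x (i + j) = 1` and
0 otherwise, which is `x (i + j) * (2 - x (i + j))`. Both sides of the resulting congruence lie in
`{0, 1, 2}`, so it is an equality of integers.
-/

open Finset Function

/-- The global map of the one-dimensional cellular automaton with local rule `f`. The lattice of
cells `ι` may be `ℤ`, but also `ℕ` (one-sided configurations) or `ZMod m` (periodic ones). -/
def globalMap {ι A : Type*} [Add ι] [One ι] (f : A → A → A) (x : ι → A) (i : ι) : A :=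
  f (x i) (x (i + 1))

/-- The local rule of the semigroup G₁₀, as a polynomial over an arbitrary commutative ring so that
it can be reduced modulo 4. -/
def ruleG10 {R : Type*} [CommRing R] (u v : R) : R :=
  u * v * (u + v - u * v)

section GlobalMap

variable {ι A B M : Type*}

theorem globalMap_semiconj [Add ι] [One ι] {f : A → A → A} {g : B → B → B} {φ : A → B}
    (hφ : ∀ u v, φ (f u v) = g (φ u) (φ v)) :
    Semiconj (fun x : ι → A ↦ φ ∘ x) (globalMap f) (globalMap g) :=
  fun _ ↦ funext fun _ ↦ hφ _ _

theorem globalMap_iterate_mem [Add ι] [One ι] {f : A → A → A} {s : Set A}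
    (hs : ∀ u ∈ s, ∀ v ∈ s, f u v ∈ s) {x : ι → A} (hx : ∀ i, x i ∈ s) (n : ℕ) (i : ι) :
    (globalMap f)^[n] x i ∈ s := by
  have h : Set.MapsTo (globalMap f) {y : ι → A | ∀ i, y i ∈ s} {y | ∀ i, y i ∈ s} :=
    fun _ hy i ↦ hs _ (hy i) _ (hy (i + 1))
  exact h.iterate n hx i

theorem globalMap_mul_iterate_apply [AddMonoidWithOne ι] [CommMonoid M] (x : ι → M) (n : ℕ)
    (i : ι) :
    (globalMap (· * ·))^[n] x i = ∏ j ∈ range (n + 1), x (i + j) ^ n.choose j := by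
  induction n generalizing i with
  | zero => simp
  | succ n ih =>
    have shift (j : ℕ) : i + 1 + j = i + (j + 1 : ℕ) := by
      rw [add_assoc, add_comm j, Nat.cast_add, Nat.cast_one]
    rw [iterate_succ_apply', globalMap, ih, ih, prod_pow_choose_succ fun j _ ↦ x (i + j)]
    simp only [shift]

end GlobalMap

theorem prod_range_succ_eq_mul_prod_Icc {M : Type*} [CommMonoid M] (f : ℕ → M) {n : ℕ}
    (hn : 1 ≤ n) : ∏ j ∈ range (n + 1), f j = f 0 * f n * ∏ j ∈ Icc 1 (n - 1), f j := by
  rw [prod_range_succ, prod_range_eq_mul_Ico f hn, mul_right_comm, ← Ico_add_one_right_eq_Icc,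
    Nat.sub_add_cancel hn]

theorem two_le_choose {n j : ℕ} (hj : 0 < j) (hjn : j < n) : 2 ≤ n.choose j := by
  have hpos := Nat.choose_pos hjn.le
  have hne : n.choose j ≠ 1 := by rw [Ne, Nat.choose_eq_one_iff]; lia
  lia

theorem ruleG10_eq_mul_of_zmod_four (u v : ZMod 4) : ruleG10 u v = u * v := by
  decide +revert

theorem pow_eq_mul_two_sub_of_zmod_four {u : ZMod 4} (hu : u = 0 ∨ u = 1 ∨ u = 2) {k : ℕ}
    (hk : 2 ≤ k) : u ^ k = u * (2 - u) := by
  obtain ⟨m, rfl⟩ := Nat.exists_eq_add_of_le hk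
  have two_sq : (2 : ZMod 4) ^ 2 = 0 := rfl
  rcases hu with rfl | rfl | rfl
  · simp
  · norm_num
  · simp [pow_add, two_sq]

theorem intCast_ruleG10 (u v : ℤ) : ((ruleG10 u v : ℤ) : ZMod 4) = (u : ZMod 4) * v := by
  rw [← ruleG10_eq_mul_of_zmod_four]
  simp only [ruleG10, Int.cast_mul, Int.cast_sub, Int.cast_add]

theorem intCast_ruleG10_iterate {ι : Type*} [AddMonoidWithOne ι] (x : ι → ℤ) (n : ℕ) (i : ι) :
    (((globalMap ruleG10)^[n] x i : ℤ) : ZMod 4) =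
      ∏ j ∈ range (n + 1), (x (i + j) : ZMod 4) ^ n.choose j := by
  have semiconj := (globalMap_semiconj (ι := ι) (g := (· * ·)) intCast_ruleG10).iterate_right n
  exact (congrFun (semiconj x) i).trans (globalMap_mul_iterate_apply _ n i)

theorem ruleG10_mem {u v : ℤ} (hu : u ∈ ({0, 1, 2} : Set ℤ)) (hv : v ∈ ({0, 1, 2} : Set ℤ)) :
    ruleG10 u v ∈ ({0, 1, 2} : Set ℤ) := by
  rcases hu with rfl | rfl | rfl <;> rcases hv with rfl | rfl | rfl <;> simp [ruleG10]

theorem prod_mul_two_sub_eq_zero_or_one {κ : Type*} {y : κ → ℤ}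
    (hy : ∀ j, y j ∈ ({0, 1, 2} : Set ℤ)) (s : Finset κ) :
    ∏ j ∈ s, y j * (2 - y j) = 0 ∨ ∏ j ∈ s, y j * (2 - y j) = 1 := by
  refine prod_induction _ (fun a ↦ a = 0 ∨ a = 1) ?_ (.inr rfl) fun j _ ↦ ?_
  · rintro a b (rfl | rfl) (rfl | rfl) <;> simp
  · rcases hy j with h | h | (h : y j = 2) <;> simp [h]

theorem eq_of_intCast_zmod_four_eq {a b : ℤ} (ha : a ∈ ({0, 1, 2} : Set ℤ))
    (hb : b ∈ ({0, 1, 2} : Set ℤ)) (h : (a : ZMod 4) = b) : a = b := by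
  have subset_Ico : ({0, 1, 2} : Set ℤ) ⊆ Set.Ico 0 (4 : ℕ) := by
    rintro _ (rfl | rfl | rfl) <;> simp
  exact CharP.intCast_injOn_Ico (ZMod 4) 4 (subset_Ico ha) (subset_Ico hb) h

theorem ruleG10_mul_prod_mem {κ : Type*} {u v : ℤ} {y : κ → ℤ} (hu : u ∈ ({0, 1, 2} : Set ℤ))
    (hv : v ∈ ({0, 1, 2} : Set ℤ)) (hy : ∀ j, y j ∈ ({0, 1, 2} : Set ℤ)) (s : Finset κ) :
    ruleG10 u v * ∏ j ∈ s, y j * (2 - y j) ∈ ({0, 1, 2} : Set ℤ) := by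
  rcases prod_mul_two_sub_eq_zero_or_one hy s with h | h
  · simp [h]
  · simpa only [h, mul_one] using ruleG10_mem hu hv

theorem stmt_10_general {ι : Type*} [AddMonoidWithOne ι] {x : ι → ℤ}
    (hx : ∀ i, x i ∈ ({0, 1, 2} : Set ℤ)) {n : ℕ} (hn : 1 ≤ n) (i : ι) :
    (globalMap ruleG10)^[n] x i =
      ruleG10 (x i) (x (i + n)) * ∏ j ∈ Icc 1 (n - 1), x (i + j) * (2 - x (i + j)) := by
  have inner_factor : ∀ j ∈ Icc 1 (n - 1),
      (x (i + j) : ZMod 4) ^ n.choose j = x (i + j) * (2 - x (i + j)) := by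
    intro j hj
    rw [mem_Icc] at hj
    refine pow_eq_mul_two_sub_of_zmod_four ?_ (two_le_choose (by lia) (by lia))
    rcases hx (i + j) with h | h | (h : x (i + j) = 2) <;> simp [h]
  apply eq_of_intCast_zmod_four_eq
  · exact globalMap_iterate_mem (fun _ hu _ hv ↦ ruleG10_mem hu hv) hx n i
  · exact ruleG10_mul_prod_mem (hx i) (hx (i + n)) (fun j : ℕ ↦ hx (i + j)) _
  · rw [intCast_ruleG10_iterate, prod_range_succ_eq_mul_prod_Icc _ hn, prod_congr rfl inner_factor]
    simp [intCast_ruleG10]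

/-- Rule G₁₀. -/
theorem stmt_10 (F : (ℤ → ℤ) → (ℤ → ℤ))
    (hF : ∀ x : ℤ → ℤ, ∀ i : ℤ,
      F x i = x i * x (i + 1) * (x i + x (i + 1) - x i * x (i + 1)))
    (x : ℤ → ℤ) (hx : ∀ i : ℤ, x i ∈ ({0, 1, 2} : Set ℤ)) :
    ∀ n : ℕ, 1 ≤ n → ∀ i : ℤ,
      F^[n] x i = x i * x (i + n) * (x i + x (i + n) - x i * x (i + n)) *
        ∏ j ∈ Finset.Icc 1 (n - 1), x (i + j) * (2 - x (i + j)) := by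
  obtain rfl : F = globalMap ruleG10 := funext₂ hF
  exact fun n hn i ↦ stmt_10_general hx hn i
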